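/- Let C be a conjugation on the complex Hilbert space K, let S be a bounded normal operator on K with S♭ = S, and let E be the spectral measure of S on 𝔖 = σ(S). Let F assign to each A ∈ Bor_E(𝔖) a self-adjoint idempotent F(A) ∈ B(K) such that F(A)♭ = F(A), F(∅) = 0, F(𝔖) = I, F(A ∩ B) = F(A)F(B) for all A, B ∈ Bor_E(𝔖), and the set functions A ↦ ⟨F(A)ξ, η⟩ are countably additive on Bor_E(𝔖) for all ξ, η ∈ K. Suppose in addition that for every A ∈ Bor_E(𝔖): (a) S(F(A)K) ⊆ F(A)K, and (b) the spectrum of the restriction S|F(A)K is contained in the closure [A]. Then F(A) = E(A) for every A ∈ Bor_E(𝔖). -/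

import Mathlib

open MeasureTheory
open scoped InnerProductSpace ComplexConjugate ENNReal

/-- A conjugation on a complex Hilbert space `K`. -/
structure IsConjugation {K : Type*} [NormedAddCommGroup K] [InnerProductSpace ℂ K]
    (C : K → K) : Prop where
  map_add : ∀ x y : K, C (x + y) = C x + C y
  map_smul : ∀ (a : ℂ) (x : K), C (a • x) = (conj a) • C x
  invol : ∀ x : K, C (C x) = x
  inner_map : ∀ x y : K, ⟪C x, C y⟫_ℂ = conj ⟪x, y⟫_ℂ

/-- A (projection-valued) spectral measure on the Borel subsets of the set `𝔖 ⊆ ℂ`,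
together with the family `μ` of its associated diagonal scalar measures
`μ ξ (A) = ⟨E(A)ξ, ξ⟩`. -/
structure IsSpectralMeasure {K : Type*} [NormedAddCommGroup K] [InnerProductSpace ℂ K]
    [CompleteSpace K] (𝔖 : Set ℂ) (E : Set ℂ → K →L[ℂ] K) (μ : K → Measure ℂ) : Prop where
  selfAdjoint : ∀ A : Set ℂ, MeasurableSet A → A ⊆ 𝔖 → IsSelfAdjoint (E A)
  empty : E ∅ = 0
  univ : E 𝔖 = 1
  inter : ∀ A B : Set ℂ, MeasurableSet A → MeasurableSet B → A ⊆ 𝔖 → B ⊆ 𝔖 →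
    E (A ∩ B) = E A ∘L E B
  countablyAdditive : ∀ (ξ η : K) (A : ℕ → Set ℂ), (∀ n, MeasurableSet (A n)) →
    (∀ n, A n ⊆ 𝔖) → Pairwise (Function.onFun Disjoint A) →
    HasSum (fun n => ⟪η, E (A n) ξ⟫_ℂ) ⟪η, E (⋃ n, A n) ξ⟫_ℂ
  measure_eq : ∀ (ξ : K) (A : Set ℂ), MeasurableSet A → A ⊆ 𝔖 →
    μ ξ A = ENNReal.ofReal (⟪ξ, E A ξ⟫_ℂ).re
  measure_compl : ∀ ξ : K, μ ξ 𝔖ᶜ = 0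

/-- The polarized integral `∫_𝔖 f dμ_{ξ,η}` of `f` against the complex measure
`μ_{ξ,η}(A) = ⟨E(A)ξ, η⟩`, expressed through the four diagonal (positive) measures. -/
noncomputable def specInt {K : Type*} [NormedAddCommGroup K] [InnerProductSpace ℂ K]
    (μ : K → Measure ℂ) (f : ℂ → ℂ) (ξ η : K) : ℂ :=
  (4 : ℂ)⁻¹ * (((∫ z, f z ∂(μ (ξ + η))) - ∫ z, f z ∂(μ (ξ - η)))
    + Complex.I * ((∫ z, f z ∂(μ (ξ + Complex.I • η))) - ∫ z, f z ∂(μ (ξ - Complex.I • η))))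

/-- The image `A^c = {conj z : z ∈ A}` of a subset of `ℂ` under complex conjugation. -/
def conjSet (A : Set ℂ) : Set ℂ := (fun z => conj z) '' A

/-- The collection `Bor_E(𝔖)` of Borel subsets `A ⊆ 𝔖` with `C ∘ E(A) ∘ C = E(A)`. -/
def borE {K : Type*} [NormedAddCommGroup K] [InnerProductSpace ℂ K] [CompleteSpace K]
    (C : K → K) (𝔖 : Set ℂ) (E : Set ℂ → K →L[ℂ] K) : Set (Set ℂ) :=
  {A | MeasurableSet A ∧ A ⊆ 𝔖 ∧ ∀ ξ : K, C (E A (C ξ)) = E A ξ}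

/-!
The heart of the matter is that a projection-valued measure `F` equals `E` as soon as
`E Dᶜ * F D = 0` for every closed `D`: then `‖F D ξ‖ ≤ ‖E D ξ‖`, and regularity promotes this to
`μ_F ≤ μ_E` on all Borel sets for the scalar measures, which have the same total mass. The
orthogonality is local. If `w ∉ D`, then `w - S` is bounded below on the range of `F D`, whereas on
the range of `E (ball w ε)` it has norm at most `2 * ε` by a numerical radius estimate; since both
projections commute with `S`, their product vanishes for small `ε`.

Applied to `E` and `B ↦ C ∘ E (conj B) ∘ C`, which both represent `S = S♭`, this shows that
conjugation-symmetric Borel sets belong to `Bor_E(𝔖)`. As `F` is not defined on all Borel sets, it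
is then compared with `E` after folding `ℂ` along the real axis, which gives `F = E` on symmetric
sets. Finally `A ∈ Bor_E(𝔖)` means that `A` and `conj A` have the same `E`-value, so `A` lies
between the symmetric sets `A ∩ conj A` and `A ∪ conj A`, on which `E`, and hence `F`, takes a
single value.
-/

section Operators

theorem commute_of_mul_mul_eq_mul {R : Type*} [Ring R] {p q s : R} (hpq : p + q = 1)
    (hp : p * s * p = s * p) (hq : q * s * q = s * q) : Commute p s := by
  have hpsq : p * s * q = 0 :=
    calc p * s * q = (p + q) * s * q - q * s * q := by noncomm_ring
      _ = 0 := by rw [hpq, one_mul, hq, sub_self]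
  calc p * s = p * s * (p + q) := by rw [hpq, mul_one]
    _ = s * p := by rw [mul_add, hp, hpsq, add_zero]

theorem mul_eq_zero_symm_of_isSelfAdjoint {R : Type*} [NonUnitalRing R] [StarRing R] {p q : R}
    (hp : IsSelfAdjoint p) (hq : IsSelfAdjoint q) (hpq : p * q = 0) : q * p = 0 :=
  (hp.commute_of_mul_eq_zero hq hpq).eq.symm.trans hpq

theorem mul_eq_zero_of_norm_mul_lt {𝕜 V : Type*} [NontriviallyNormedField 𝕜]
    [NormedAddCommGroup V] [NormedSpace 𝕜 V] {T P Q : V →L[𝕜] V} {δ : ℝ}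
    (hP : IsIdempotentElem P) (hTP : Commute T P) (hTQ : Commute T Q)
    (hlt : ‖T * P‖ < δ) (hQ : ∀ x, δ * ‖Q x‖ ≤ ‖T (Q x)‖) : Q * P = 0 := by
  have hδ : 0 < δ := (norm_nonneg _).trans_lt hlt
  have hTQP : T * (Q * P) = Q * P * (T * P) := by
    rw [← mul_assoc, hTQ.eq, mul_assoc, hTP.eq, mul_assoc, ← mul_assoc P P, hP.eq]
  have hle : ‖Q * P‖ ≤ ‖T * P‖ / δ * ‖Q * P‖ := by
    refine ContinuousLinearMap.opNorm_le_bound _ (by positivity) fun x => ?_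
    have hδx : δ * ‖(Q * P) x‖ ≤ ‖T * P‖ * ‖Q * P‖ * ‖x‖ :=
      calc δ * ‖(Q * P) x‖ ≤ ‖(T * (Q * P)) x‖ := hQ (P x)
        _ ≤ ‖Q * P * (T * P)‖ * ‖x‖ := hTQP ▸ ContinuousLinearMap.le_opNorm _ x
        _ ≤ ‖T * P‖ * ‖Q * P‖ * ‖x‖ := by
          gcongr
          exact (norm_mul_le _ _).trans_eq (mul_comm _ _)
    rw [div_mul_eq_mul_div, div_mul_eq_mul_div, le_div_iff₀ hδ, mul_comm]
    exact hδx
  by_contra hne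
  have hpos : 0 < ‖Q * P‖ := norm_pos_iff.2 hne
  exact absurd hle (mul_lt_of_lt_one_left hpos ((div_lt_one hδ).2 hlt)).not_ge

theorem exists_pos_forall_mul_norm_le_of_bijOn {𝕜 V W : Type*} [NontriviallyNormedField 𝕜]
    [NormedAddCommGroup V] [NormedSpace 𝕜 V] [CompleteSpace V]
    [NormedAddCommGroup W] [NormedSpace 𝕜 W] [CompleteSpace W] {T : V →L[𝕜] W}
    {p : Submodule 𝕜 V} {q : Submodule 𝕜 W} (hp : IsClosed (p : Set V))
    (hq : IsClosed (q : Set W)) (hT : Set.BijOn T p q) :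
    ∃ δ > 0, ∀ x ∈ p, δ * ‖x‖ ≤ ‖T x‖ := by
  have : CompleteSpace p := hp.completeSpace_coe
  have hinj : Function.Injective (T ∘L p.subtypeL) := fun x y hxy =>
    Subtype.ext (hT.injOn x.2 y.2 hxy)
  have hrange : Set.range (T ∘L p.subtypeL) = q := by
    rw [ContinuousLinearMap.coe_comp, Set.range_comp]
    simpa using hT.image_eq
  obtain ⟨δ, hδ, hle⟩ := antilipschitzWith_iff_exists_mul_le_norm.1
    ⟨_, ContinuousLinearMap.antilipschitz_of_injective_of_isClosed_range _ hinj
      (hrange ▸ hq) |>.choose_spec⟩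
  exact ⟨δ, hδ, fun x hx => hle ⟨x, hx⟩⟩

theorem exists_pos_forall_mul_norm_apply_le {𝕜 V : Type*} [NontriviallyNormedField 𝕜]
    [NormedAddCommGroup V] [NormedSpace 𝕜 V] [CompleteSpace V] {P T : V →L[𝕜] V}
    (hP : IsIdempotentElem P) (hinv : ∀ x, P x = x → P (T x) = T x)
    (hbij : ∀ y, P y = y → ∃! x, P x = x ∧ T x = y) :
    ∃ δ > 0, ∀ x, δ * ‖P x‖ ≤ ‖T (P x)‖ := by
  have hclosed : IsClosed (P.eqLocus 1 : Set V) := isClosed_eq P.continuous continuous_id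
  have hbijOn : Set.BijOn T (P.eqLocus 1 : Set V) (P.eqLocus 1 : Set V) :=
    ⟨hinv, fun x hx y hy hxy => (hbij _ (hinv y hy)).unique ⟨hx, hxy⟩ ⟨hy, rfl⟩,
      fun y hy => (hbij y hy).exists⟩
  obtain ⟨δ, hδ, hle⟩ := exists_pos_forall_mul_norm_le_of_bijOn hclosed hclosed hbijOn
  exact ⟨δ, hδ, fun x => hle (P x) (DFunLike.congr_fun hP.eq x)⟩

variable {K : Type*} [NormedAddCommGroup K] [InnerProductSpace ℂ K]

theorem clm_ext_inner_self {S T : K →L[ℂ] K} (h : ∀ x, ⟪x, S x⟫_ℂ = ⟪x, T x⟫_ℂ) : S = T :=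
  ContinuousLinearMap.coe_injective <| (ext_inner_map _ _).1 fun x => by
    rw [ContinuousLinearMap.coe_coe, ContinuousLinearMap.coe_coe, ← inner_conj_symm, h,
      inner_conj_symm]

theorem opNorm_le_of_norm_inner_self_le {T : K →L[ℂ] K} {ε : ℝ} (hε : 0 ≤ ε)
    (hT : ∀ x, ‖⟪T x, x⟫_ℂ‖ ≤ ε * ‖x‖ ^ 2) : ‖T‖ ≤ 2 * ε := by
  refine ContinuousLinearMap.opNorm_le_of_re_inner_le (by positivity) fun x y hx hy => ?_
  have hsum (u v : K) (hu : ‖u‖ = 1) (hv : ‖v‖ = 1) :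
      ‖⟪T (u + v), u + v⟫_ℂ‖ + ‖⟪T (u - v), u - v⟫_ℂ‖ ≤ 4 * ε :=
    calc _ ≤ ε * (‖u + v‖ ^ 2 + ‖u - v‖ ^ 2) := by linarith [hT (u + v), hT (u - v)]
      _ = 4 * ε := by rw [parallelogram_law_with_norm ℂ, hu, hv]; ring
  have hIy : ‖Complex.I • y‖ = 1 := by simp [norm_smul, hy]
  have hpolar := inner_map_polarization' (T : K →ₗ[ℂ] K) x y
  simp only [ContinuousLinearMap.coe_coe] at hpolar
  calc (⟪T x, y⟫_ℂ).re ≤ ‖⟪T x, y⟫_ℂ‖ := Complex.re_le_norm _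
    _ ≤ (‖⟪T (x + y), x + y⟫_ℂ‖ + ‖⟪T (x - y), x - y⟫_ℂ‖
        + ‖⟪T (x + Complex.I • y), x + Complex.I • y⟫_ℂ‖
        + ‖⟪T (x - Complex.I • y), x - Complex.I • y⟫_ℂ‖) / 4 := by
      rw [hpolar, norm_div, Complex.norm_ofNat]
      gcongr
      refine (norm_add_le _ _).trans (add_le_add ((norm_sub_le _ _).trans
        (add_le_add (norm_sub_le _ _) ?_)) ?_) <;>
        rw [norm_mul, Complex.norm_I, one_mul]
    _ ≤ 2 * ε := by linarith [hsum x y hx hy, hsum x (Complex.I • y) hx hIy]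

variable [CompleteSpace K]

theorem inner_self_eq_norm_sq_of_isStarProjection {P : K →L[ℂ] K} (hP : IsStarProjection P)
    (x : K) : ⟪x, P x⟫_ℂ = ‖P x‖ ^ 2 :=
  calc ⟪x, P x⟫_ℂ = ⟪x, P (P x)⟫_ℂ := congrArg _ (DFunLike.congr_fun hP.isIdempotentElem.eq x).symm
    _ = ⟪P x, P x⟫_ℂ := (hP.isSelfAdjoint.isSymmetric _ _).symm
    _ = ‖P x‖ ^ 2 := inner_self_eq_norm_sq_to_K _

end Operators

/-- A projection-valued measure with total set `𝔖` on a family `𝒜` of subsets of `α`, countable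
additivity being understood weakly. It covers the spectral measure `E`, defined on the Borel
subsets of `𝔖 = σ(S)`, as well as `F`, defined on `Bor_E(𝔖)` only. -/
structure IsProjectionValuedOn {α K : Type*} [NormedAddCommGroup K] [InnerProductSpace ℂ K]
    [CompleteSpace K] (𝒜 : Set (Set α)) (𝔖 : Set α) (E : Set α → K →L[ℂ] K) : Prop where
  isSelfAdjoint : ∀ A ∈ 𝒜, IsSelfAdjoint (E A)
  empty : E ∅ = 0
  total : E 𝔖 = 1
  inter : ∀ A ∈ 𝒜, ∀ B ∈ 𝒜, E (A ∩ B) = E A * E B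
  hasSum_inner : ∀ (ξ η : K) (A : ℕ → Set α), (∀ n, A n ∈ 𝒜) →
    Pairwise (Function.onFun Disjoint A) →
    HasSum (fun n => ⟪η, E (A n) ξ⟫_ℂ) ⟪η, E (⋃ n, A n) ξ⟫_ℂ

/-- A projection-valued measure on all measurable subsets of `α`. -/
abbrev IsProjectionValuedMeasure {α K : Type*} [MeasurableSpace α] [NormedAddCommGroup K]
    [InnerProductSpace ℂ K] [CompleteSpace K] (E : Set α → K →L[ℂ] K) : Prop :=
  IsProjectionValuedOn {B | MeasurableSet B} Set.univ E

namespace IsProjectionValuedOn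

variable {α β K : Type*} [NormedAddCommGroup K] [InnerProductSpace ℂ K] [CompleteSpace K]
  {𝒜 : Set (Set α)} {𝔖 A B : Set α} {E : Set α → K →L[ℂ] K}

theorem isStarProjection (h : IsProjectionValuedOn 𝒜 𝔖 E) (hA : A ∈ 𝒜) :
    IsStarProjection (E A) :=
  ⟨by rw [IsIdempotentElem, ← h.inter A hA A hA, Set.inter_self], h.isSelfAdjoint A hA⟩

theorem mul_eq_left (h : IsProjectionValuedOn 𝒜 𝔖 E) (hA : A ∈ 𝒜) (hB : B ∈ 𝒜) (hAB : A ⊆ B) :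
    E A * E B = E A := by
  rw [← h.inter A hA B hB, Set.inter_eq_left.2 hAB]

theorem mul_eq_right (h : IsProjectionValuedOn 𝒜 𝔖 E) (hA : A ∈ 𝒜) (hB : B ∈ 𝒜) (hBA : B ⊆ A) :
    E A * E B = E B := by
  rw [← h.inter A hA B hB, Set.inter_eq_right.2 hBA]

theorem map [MeasurableSpace β] (h : IsProjectionValuedOn 𝒜 𝔖 E) {φ : α → β}
    (hφ : ∀ B, MeasurableSet B → φ ⁻¹' B ∩ 𝔖 ∈ 𝒜) :
    IsProjectionValuedMeasure fun B => E (φ ⁻¹' B ∩ 𝔖) where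
  isSelfAdjoint B hB := h.isSelfAdjoint _ (hφ B hB)
  empty := by rw [Set.preimage_empty, Set.empty_inter, h.empty]
  total := by rw [Set.preimage_univ, Set.univ_inter, h.total]
  inter A hA B hB := by
    rw [← h.inter _ (hφ A hA) _ (hφ B hB), Set.preimage_inter, Set.inter_inter_distrib_right]
  hasSum_inner ξ η A hA hdisj := by
    rw [Set.preimage_iUnion, Set.iUnion_inter]
    exact h.hasSum_inner ξ η _ (fun n => hφ _ (hA n)) fun m n hmn =>
      ((hdisj hmn).preimage φ).mono Set.inter_subset_left Set.inter_subset_left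

theorem apply_eq_of_subset_of_subset {A₁ A₂ : Set α} (h : IsProjectionValuedOn 𝒜 𝔖 E)
    (hA : A ∈ 𝒜) (hA₁ : A₁ ∈ 𝒜) (hA₂ : A₂ ∈ 𝒜) (h₁ : A₁ ⊆ A) (h₂ : A ⊆ A₂)
    (heq : E A₁ = E A₂) : E A = E A₁ := by
  rw [← h.mul_eq_left hA hA₂ h₂, ← heq, h.mul_eq_right hA hA₁ h₁]

end IsProjectionValuedOn

theorem measure_eq_of_forall_isClosed_le {α : Type*} [TopologicalSpace α]
    [TopologicalSpace.PseudoMetrizableSpace α] [MeasurableSpace α] [BorelSpace α]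
    {μ ν : Measure α} [IsFiniteMeasure μ] [IsFiniteMeasure ν]
    (hle : ∀ D, IsClosed D → μ D ≤ ν D) (huniv : μ Set.univ = ν Set.univ) : μ = ν := by
  refine Measure.eq_of_le_of_measure_univ_eq (Measure.le_iff.2 fun B hB => ?_) huniv
  rw [hB.measure_eq_iSup_isClosed_of_ne_top (measure_ne_top μ B)]
  exact iSup₂_le fun D hDB => iSup_le fun hD => (hle D hD).trans (measure_mono hDB)

namespace IsProjectionValuedMeasure

variable {α K : Type*} [MeasurableSpace α] [NormedAddCommGroup K] [InnerProductSpace ℂ K]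
  [CompleteSpace K] {A B : Set α} {E F : Set α → K →L[ℂ] K}

/-- The diagonal scalar measure `B ↦ ⟪ξ, E B ξ⟫ = ‖E B ξ‖²` of a projection-valued measure. -/
noncomputable def diagMeasure (h : IsProjectionValuedMeasure E) (ξ : K) : Measure α :=
  Measure.ofMeasurable (fun B _ => ENNReal.ofReal (⟪ξ, E B ξ⟫_ℂ).re)
    (by simp [h.empty])
    fun A hA hdisj => by
      have hsum := Complex.hasSum_re (h.hasSum_inner ξ ξ A hA hdisj)
      rw [← hsum.tsum_eq]
      refine ENNReal.ofReal_tsum_of_nonneg (fun n => ?_) hsum.summable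
      rw [inner_self_eq_norm_sq_of_isStarProjection (h.isStarProjection (hA n)),
        ← Complex.ofReal_pow, Complex.ofReal_re]
      positivity

theorem diagMeasure_apply (h : IsProjectionValuedMeasure E) (ξ : K) (hB : MeasurableSet B) :
    h.diagMeasure ξ B = ENNReal.ofReal (‖E B ξ‖ ^ 2) := by
  rw [diagMeasure, Measure.ofMeasurable_apply B hB,
    inner_self_eq_norm_sq_of_isStarProjection (h.isStarProjection hB), ← Complex.ofReal_pow,
    Complex.ofReal_re]

theorem diagMeasure_univ (h : IsProjectionValuedMeasure E) (ξ : K) :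
    h.diagMeasure ξ Set.univ = ENNReal.ofReal (‖ξ‖ ^ 2) := by
  rw [h.diagMeasure_apply ξ .univ, h.total, one_apply_eq_self]

instance isFiniteMeasure_diagMeasure (h : IsProjectionValuedMeasure E) (ξ : K) :
    IsFiniteMeasure (h.diagMeasure ξ) :=
  ⟨by rw [h.diagMeasure_univ]; exact ENNReal.ofReal_lt_top⟩

theorem diagMeasure_real_apply (h : IsProjectionValuedMeasure E) (ξ : K) (hB : MeasurableSet B) :
    (h.diagMeasure ξ).real B = ‖E B ξ‖ ^ 2 := by
  rw [measureReal_def, h.diagMeasure_apply ξ hB, ENNReal.toReal_ofReal (by positivity)]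

theorem diagMeasure_eq_zero_iff (h : IsProjectionValuedMeasure E) (ξ : K)
    (hB : MeasurableSet B) : h.diagMeasure ξ B = 0 ↔ E B ξ = 0 := by
  rw [← measureReal_eq_zero_iff, h.diagMeasure_real_apply ξ hB, sq_eq_zero_iff, norm_eq_zero]

theorem diagMeasure_apply_eq_restrict (h : IsProjectionValuedMeasure E) (ξ : K)
    (hB : MeasurableSet B) : h.diagMeasure (E B ξ) = (h.diagMeasure ξ).restrict B := by
  ext A hA
  rw [Measure.restrict_apply hA, h.diagMeasure_apply _ hA, h.diagMeasure_apply _ (hA.inter hB),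
    h.inter A hA B hB, mul_apply_eq_comp]

theorem inner_apply_self (h : IsProjectionValuedMeasure E) (ξ : K) (hB : MeasurableSet B) :
    ⟪ξ, E B ξ⟫_ℂ = (h.diagMeasure ξ).real B := by
  rw [inner_self_eq_norm_sq_of_isStarProjection (h.isStarProjection hB),
    h.diagMeasure_real_apply ξ hB, Complex.ofReal_pow]

theorem apply_eq_of_diagMeasure_eq (hE : IsProjectionValuedMeasure E)
    (hF : IsProjectionValuedMeasure F) (hEF : ∀ ξ, hE.diagMeasure ξ = hF.diagMeasure ξ)
    (hB : MeasurableSet B) : E B = F B :=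
  clm_ext_inner_self fun ξ => by rw [hE.inner_apply_self ξ hB, hF.inner_apply_self ξ hB, hEF]

theorem add_compl (h : IsProjectionValuedMeasure E) (hB : MeasurableSet B) :
    E B + E Bᶜ = 1 :=
  clm_ext_inner_self fun ξ => by
    rw [add_apply, inner_add_right, h.inner_apply_self ξ hB,
      h.inner_apply_self ξ hB.compl, ← Complex.ofReal_add,
      measureReal_add_measureReal_compl hB, ← h.inner_apply_self ξ .univ, h.total]

theorem mul_compl (h : IsProjectionValuedMeasure E) (hB : MeasurableSet B) :
    E B * E Bᶜ = 0 := by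
  rw [← h.inter B hB Bᶜ hB.compl, Set.inter_compl_self, h.empty]

theorem apply_union_of_eq (h : IsProjectionValuedMeasure E) (hA : MeasurableSet A)
    (hB : MeasurableSet B) (hAB : E A = E B) : E (A ∪ B) = E A := by
  have hcompl : E Aᶜ = E Bᶜ := by
    rw [eq_sub_of_add_eq' (h.add_compl hA), eq_sub_of_add_eq' (h.add_compl hB), hAB]
  rw [eq_sub_of_add_eq (h.add_compl (hA.union hB)), Set.compl_union,
    h.inter _ hA.compl _ hB.compl, ← hcompl, (h.isStarProjection hA.compl).isIdempotentElem.eq,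
    eq_sub_of_add_eq (h.add_compl hA)]

theorem map {β : Type*} [MeasurableSpace β] (h : IsProjectionValuedMeasure E) {φ : α → β}
    (hφ : Measurable φ) : IsProjectionValuedMeasure fun B => E (φ ⁻¹' B) := by
  simpa only [Set.inter_univ] using
    IsProjectionValuedOn.map h fun B hB => (hφ hB).inter MeasurableSet.univ

theorem diagMeasure_smul (h : IsProjectionValuedMeasure E) (a : ℂ) (ξ : K) :
    h.diagMeasure (a • ξ) = ENNReal.ofReal (‖a‖ ^ 2) • h.diagMeasure ξ := by
  ext B hB
  rw [h.diagMeasure_apply _ hB, Measure.smul_apply, h.diagMeasure_apply _ hB, map_smul, norm_smul,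
    mul_pow, ENNReal.ofReal_mul (by positivity), smul_eq_mul]

theorem mul_eq_zero_of_forall_exists_nhds [TopologicalSpace α] [SecondCountableTopology α]
    (h : IsProjectionValuedMeasure E) {s : Set α} (hs : MeasurableSet s) {T : K →L[ℂ] K}
    (hT : ∀ z ∈ s, ∃ u ∈ nhds z, MeasurableSet u ∧ E u * T = 0) : E s * T = 0 := by
  ext ξ
  refine (h.diagMeasure_eq_zero_iff (T ξ) hs).1 (measure_null_of_locally_null s fun z hz => ?_)
  obtain ⟨u, hu, hum, huT⟩ := hT z hz
  exact ⟨u, mem_nhdsWithin_of_mem_nhds hu,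
    (h.diagMeasure_eq_zero_iff (T ξ) hum).2 (DFunLike.congr_fun huT ξ)⟩

theorem apply_eq_of_forall_isClosed_mul_eq_zero [TopologicalSpace α]
    [TopologicalSpace.PseudoMetrizableSpace α] [BorelSpace α]
    (hE : IsProjectionValuedMeasure E) (hF : IsProjectionValuedMeasure F)
    (hEF : ∀ D, IsClosed D → E Dᶜ * F D = 0) (hB : MeasurableSet B) : F B = E B := by
  refine hF.apply_eq_of_diagMeasure_eq hE (fun ξ => ?_) hB
  refine measure_eq_of_forall_isClosed_le (fun D hD => ?_) ?_
  · have hDm := hD.measurableSet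
    have hFE : F D * E D = F D := by
      rw [eq_sub_of_add_eq (hE.add_compl hDm), mul_sub, mul_one,
        mul_eq_zero_symm_of_isSelfAdjoint (hE.isSelfAdjoint _ hDm.compl) (hF.isSelfAdjoint _ hDm)
          (hEF D hD), sub_zero]
    rw [hF.diagMeasure_apply ξ hDm, hE.diagMeasure_apply ξ hDm]
    gcongr
    calc ‖F D ξ‖ = ‖F D (E D ξ)‖ := by rw [← mul_apply_eq_comp, hFE]
      _ ≤ 1 * ‖E D ξ‖ := (F D).le_of_opNorm_le (hF.isStarProjection hDm).norm_le _
      _ = ‖E D ξ‖ := one_mul _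
  · rw [hF.diagMeasure_univ, hE.diagMeasure_univ]

theorem commute_of_forall_invariant (h : IsProjectionValuedMeasure E) {S : K →L[ℂ] K}
    (hinv : ∀ B, MeasurableSet B → ∀ ξ, E B ξ = ξ → E B (S ξ) = S ξ) (hB : MeasurableSet B) :
    Commute S (E B) := by
  have hmul (B : Set α) (hB : MeasurableSet B) : E B * S * E B = S * E B := by
    ext ξ
    exact hinv B hB _ (DFunLike.congr_fun (h.isStarProjection hB).isIdempotentElem.eq ξ)
  exact (commute_of_mul_mul_eq_mul (h.add_compl hB) (hmul B hB) (hmul Bᶜ hB.compl)).symm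

variable {E F : Set ℂ → K →L[ℂ] K} {S : K →L[ℂ] K}

/-- `h.Represents S` says `S = ∫ z dE(z)`. By polarization it is enough to ask for this on the
diagonal, which avoids complex measures. -/
structure Represents (h : IsProjectionValuedMeasure E) (S : K →L[ℂ] K) : Prop where
  integrable : ∀ ξ, Integrable (fun z => z) (h.diagMeasure ξ)
  inner_apply_self : ∀ ξ, ⟪ξ, S ξ⟫_ℂ = ∫ z, z ∂h.diagMeasure ξ

namespace Represents

variable {h : IsProjectionValuedMeasure E} {B : Set ℂ}

theorem inner_projection_eq_setIntegral (hS : h.Represents S) (hB : MeasurableSet B) (ξ : K) :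
    ⟪ξ, (E B * S * E B) ξ⟫_ℂ = ∫ z in B, z ∂h.diagMeasure ξ := by
  rw [← h.diagMeasure_apply_eq_restrict ξ hB, ← hS.inner_apply_self]
  exact ((h.isSelfAdjoint B hB).isSymmetric _ _).symm

theorem eq_add_compl (hS : h.Represents S) (hB : MeasurableSet B) :
    S = E B * S * E B + E Bᶜ * S * E Bᶜ :=
  clm_ext_inner_self fun ξ => by
    rw [add_apply, inner_add_right, hS.inner_projection_eq_setIntegral hB,
      hS.inner_projection_eq_setIntegral hB.compl, integral_add_compl hB (hS.integrable ξ),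
      hS.inner_apply_self]

theorem projection_mul_mul (hS : h.Represents S) (hB : MeasurableSet B) :
    E B * S * E B = S * E B := by
  have hcompl : E Bᶜ * E B = 0 := by simpa only [compl_compl] using h.mul_compl hB.compl
  conv_rhs => rw [hS.eq_add_compl hB, add_mul, mul_assoc _ _ (E B), mul_assoc _ _ (E B),
    (h.isStarProjection hB).isIdempotentElem.eq, hcompl, mul_zero, add_zero]

theorem commute (hS : h.Represents S) (hB : MeasurableSet B) : Commute S (E B) :=
  (commute_of_mul_mul_eq_mul (h.add_compl hB) (hS.projection_mul_mul hB)
    (hS.projection_mul_mul hB.compl)).symm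

theorem norm_sub_mul_le (hS : h.Represents S) (hB : MeasurableSet B) {w : ℂ} {ε : ℝ}
    (hε : 0 ≤ ε) (hBw : ∀ z ∈ B, ‖w - z‖ ≤ ε) : ‖(w • 1 - S) * E B‖ ≤ 2 * ε := by
  refine opNorm_le_of_norm_inner_self_le hε fun ξ => ?_
  have hinner : ⟪ξ, ((w • 1 - S) * E B) ξ⟫_ℂ = ∫ z in B, (w - z) ∂h.diagMeasure ξ := by
    rw [integral_sub (integrable_const w) (hS.integrable ξ).integrableOn,
      ← hS.inner_projection_eq_setIntegral hB, hS.projection_mul_mul hB, setIntegral_const, sub_mul,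
      sub_apply, inner_sub_right, smul_mul_assoc, one_mul, smul_apply, inner_smul_right,
      h.inner_apply_self ξ hB, Complex.real_smul, mul_comm]
  calc ‖⟪((w • 1 - S) * E B) ξ, ξ⟫_ℂ‖ = ‖∫ z in B, (w - z) ∂h.diagMeasure ξ‖ := by
        rw [norm_inner_symm, hinner]
    _ ≤ ε * (h.diagMeasure ξ).real B :=
      norm_setIntegral_le_of_norm_le_const (measure_lt_top _ _) hBw
    _ ≤ ε * (h.diagMeasure ξ).real Set.univ := by
      gcongr
      exacts [measure_ne_top _ _, Set.subset_univ B]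
    _ = ε * ‖ξ‖ ^ 2 := by rw [h.diagMeasure_real_apply ξ .univ, h.total, one_apply_eq_self]

theorem ball_mul_eq_zero (hS : h.Represents S) {Q : K →L[ℂ] K} (hQ : IsSelfAdjoint Q)
    (hSQ : Commute S Q) {w : ℂ} {ε δ : ℝ} (hε : 0 ≤ ε) (hεδ : 2 * ε < δ)
    (hδ : ∀ x, δ * ‖Q x‖ ≤ ‖(w • 1 - S) (Q x)‖) : E (Metric.ball w ε) * Q = 0 := by
  have hball : MeasurableSet (Metric.ball w ε) := measurableSet_ball
  have hnorm : ‖(w • 1 - S) * E (Metric.ball w ε)‖ ≤ 2 * ε :=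
    hS.norm_sub_mul_le hball hε fun z hz => (dist_eq_norm w z ▸ Metric.mem_ball'.1 hz).le
  have hQE : Q * E (Metric.ball w ε) = 0 :=
    mul_eq_zero_of_norm_mul_lt (h.isStarProjection hball).isIdempotentElem
      (((Commute.one_left _).smul_left w).sub_left (hS.commute hball))
      (((Commute.one_left _).smul_left w).sub_left hSQ) (hnorm.trans_lt hεδ) hδ
  exact mul_eq_zero_symm_of_isSelfAdjoint hQ (h.isSelfAdjoint _ hball) hQE

theorem mul_eq_zero_of_forall_exists_pos (hS : h.Represents S) {Q : K →L[ℂ] K}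
    (hQ : IsSelfAdjoint Q) (hSQ : Commute S Q) {U : Set ℂ} (hU : MeasurableSet U)
    (hδ : ∀ w ∈ U, ∃ δ > 0, ∀ x, δ * ‖Q x‖ ≤ ‖(w • 1 - S) (Q x)‖) : E U * Q = 0 := by
  refine h.mul_eq_zero_of_forall_exists_nhds hU fun w hw => ?_
  obtain ⟨δ, hδ0, hδ⟩ := hδ w hw
  exact ⟨Metric.ball w (δ / 3), Metric.ball_mem_nhds w (by positivity), measurableSet_ball,
    hS.ball_mul_eq_zero hQ hSQ (by positivity) (by linarith) hδ⟩

theorem mul_norm_le_norm_sub (hS : h.Represents S) (hB : MeasurableSet B) {w z : ℂ} {ε : ℝ}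
    (hε : 0 ≤ ε) (hBz : ∀ z' ∈ B, ‖z - z'‖ ≤ ε) (x : K) :
    (‖w - z‖ - 2 * ε) * ‖E B x‖ ≤ ‖(w • 1 - S) (E B x)‖ := by
  have hz : ‖(z • 1 - S) (E B x)‖ ≤ 2 * ε * ‖E B x‖ :=
    calc ‖(z • 1 - S) (E B x)‖ = ‖((z • 1 - S) * E B) (E B x)‖ := by
          rw [mul_apply_eq_comp, ← mul_apply_eq_comp (E B),
            (h.isStarProjection hB).isIdempotentElem.eq]
      _ ≤ 2 * ε * ‖E B x‖ :=
        ContinuousLinearMap.le_of_opNorm_le _ (hS.norm_sub_mul_le hB hε hBz) _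
  have hsub : (w • 1 - S) (E B x) = (w - z) • E B x + (z • 1 - S) (E B x) := by
    simp only [sub_apply, smul_apply, one_apply_eq_self, sub_smul]
    abel
  rw [hsub, sub_mul, ← norm_smul]
  exact (sub_le_sub_left hz _).trans (norm_sub_le_norm_add _ _)

theorem ball_mul_ball_eq_zero {hE : IsProjectionValuedMeasure E}
    {hF : IsProjectionValuedMeasure F} (hES : hE.Represents S) (hFS : hF.Represents S) {w z : ℂ}
    {ε : ℝ} (hε : 0 ≤ ε) (hwz : 4 * ε < ‖w - z‖) :
    E (Metric.ball w ε) * F (Metric.ball z ε) = 0 :=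
  have hball : MeasurableSet (Metric.ball z ε) := measurableSet_ball
  hES.ball_mul_eq_zero (hF.isSelfAdjoint _ hball) (hFS.commute hball) hε
    (by linarith : 2 * ε < ‖w - z‖ - 2 * ε)
    (hFS.mul_norm_le_norm_sub hball hε fun z' hz' =>
      (dist_eq_norm z z' ▸ Metric.mem_ball'.1 hz').le)

theorem compl_mul_eq_zero_of_isClosed {hE : IsProjectionValuedMeasure E}
    {hF : IsProjectionValuedMeasure F} (hES : hE.Represents S) (hFS : hF.Represents S)
    {D : Set ℂ} (hD : IsClosed D) : E Dᶜ * F D = 0 := by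
  refine hE.mul_eq_zero_of_forall_exists_nhds hD.measurableSet.compl fun w hw => ?_
  obtain ⟨r, hr, hwr⟩ := Metric.isOpen_iff.1 hD.isOpen_compl w hw
  have hball (z : ℂ) : MeasurableSet (Metric.ball z (r / 5)) := measurableSet_ball
  have hnhds (z : ℂ) : Metric.ball z (r / 5) ∈ nhds z := Metric.ball_mem_nhds z (by positivity)
  have hFE : F D * E (Metric.ball w (r / 5)) = 0 := by
    refine hF.mul_eq_zero_of_forall_exists_nhds hD.measurableSet fun z hz =>
      ⟨_, hnhds z, hball z, ?_⟩
    have hzw : r ≤ ‖z - w‖ := by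
      rw [← dist_eq_norm]
      exact not_lt.1 fun hlt => hwr (Metric.mem_ball.2 hlt) hz
    exact ball_mul_ball_eq_zero hFS hES (by positivity) (by linarith)
  exact ⟨_, hnhds w, hball w, mul_eq_zero_symm_of_isSelfAdjoint
    (hF.isSelfAdjoint _ hD.measurableSet) (hE.isSelfAdjoint _ (hball w)) hFE⟩

theorem apply_eq {hE : IsProjectionValuedMeasure E} {hF : IsProjectionValuedMeasure F}
    (hES : hE.Represents S) (hFS : hF.Represents S) (hB : MeasurableSet B) : F B = E B :=
  hE.apply_eq_of_forall_isClosed_mul_eq_zero hF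
    (fun _ hD => compl_mul_eq_zero_of_isClosed hES hFS hD) hB

theorem apply_eq_preimage_of_localized {β : Type*} [TopologicalSpace β]
    [TopologicalSpace.PseudoMetrizableSpace β] [MeasurableSpace β] [BorelSpace β]
    {F : Set β → K →L[ℂ] K} (hES : h.Represents S) (hF : IsProjectionValuedMeasure F) {φ : ℂ → β}
    (hφ : Continuous φ) (hinv : ∀ B, MeasurableSet B → ∀ ξ, F B ξ = ξ → F B (S ξ) = S ξ)
    (hspec : ∀ D, IsClosed D → ∀ w ∉ φ ⁻¹' D, ∀ y, F D y = y → ∃! x, F D x = x ∧ w • x - S x = y)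
    {B : Set β} (hB : MeasurableSet B) : F B = E (φ ⁻¹' B) := by
  refine (h.map hφ.measurable).apply_eq_of_forall_isClosed_mul_eq_zero hF (fun D hD => ?_) hB
  have hDm := hD.measurableSet
  refine hES.mul_eq_zero_of_forall_exists_pos (hF.isSelfAdjoint D hDm)
    (hF.commute_of_forall_invariant hinv hDm) (hφ.measurable hDm.compl) fun w hw => ?_
  refine exists_pos_forall_mul_norm_apply_le (hF.isStarProjection hDm).isIdempotentElem
    (fun x hx => ?_) (hspec D hD w hw)
  simp only [sub_apply, smul_apply, one_apply_eq_self, map_sub, map_smul, hx, hinv D hDm x hx]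

end Represents

end IsProjectionValuedMeasure

namespace IsConjugation

variable {α K : Type*} [NormedAddCommGroup K] [InnerProductSpace ℂ K] {C : K → K}

theorem norm_map (hC : IsConjugation C) (x : K) : ‖C x‖ = ‖x‖ := by
  rw [@norm_eq_sqrt_re_inner ℂ, hC.inner_map, RCLike.conj_re, ← norm_eq_sqrt_re_inner]

/-- A conjugation as a conjugate-linear continuous map. -/
def toContinuousLinearMap (hC : IsConjugation C) : K →L⋆[ℂ] K :=
  LinearMap.mkContinuous ⟨⟨C, hC.map_add⟩, hC.map_smul⟩ 1 fun x => by
    rw [one_mul]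
    exact (hC.norm_map x).le

theorem map_zero (hC : IsConjugation C) : C 0 = 0 :=
  hC.toContinuousLinearMap.map_zero

/-- The operator `T♭ = C ∘ T ∘ C`. -/
def flat (hC : IsConjugation C) (T : K →L[ℂ] K) : K →L[ℂ] K :=
  hC.toContinuousLinearMap ∘SL T ∘SL hC.toContinuousLinearMap

@[simp]
theorem flat_apply (hC : IsConjugation C) (T : K →L[ℂ] K) (x : K) : hC.flat T x = C (T (C x)) :=
  rfl

theorem inner_flat (hC : IsConjugation C) (T : K →L[ℂ] K) (x y : K) :
    ⟪x, hC.flat T y⟫_ℂ = conj ⟪C x, T (C y)⟫_ℂ := by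
  rw [← hC.inner_map, hC.invol, flat_apply]

theorem flat_involutive (hC : IsConjugation C) : Function.Involutive hC.flat := fun T => by
  ext x
  simp [hC.invol]

variable [CompleteSpace K]

theorem isSelfAdjoint_flat (hC : IsConjugation C) {T : K →L[ℂ] K} (hT : IsSelfAdjoint T) :
    IsSelfAdjoint (hC.flat T) :=
  ContinuousLinearMap.isSelfAdjoint_iff_isSymmetric.2 fun x y => by
    have hsymm : ⟪T (C y), C x⟫_ℂ = ⟪C y, T (C x)⟫_ℂ := hT.isSymmetric _ _
    rw [ContinuousLinearMap.coe_coe, hC.inner_flat, ← inner_conj_symm, hC.inner_flat, ← hsymm,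
      inner_conj_symm, inner_conj_symm]

theorem isProjectionValuedOn_flat (hC : IsConjugation C) {𝒜 : Set (Set α)} {𝔖 : Set α}
    {E : Set α → K →L[ℂ] K} (h : IsProjectionValuedOn 𝒜 𝔖 E) :
    IsProjectionValuedOn 𝒜 𝔖 fun B => hC.flat (E B) where
  isSelfAdjoint A hA := hC.isSelfAdjoint_flat (h.isSelfAdjoint A hA)
  empty := by
    ext x
    simp [h.empty, hC.map_zero]
  total := by
    ext x
    simp [h.total, hC.invol]
  inter A hA B hB := by
    ext x
    simp [h.inter A hA B hB, hC.invol]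
  hasSum_inner ξ η A hA hdisj := by
    simp only [hC.inner_flat]
    exact Complex.hasSum_conj'.2 (h.hasSum_inner (C ξ) (C η) A hA hdisj)

variable {E : Set ℂ → K →L[ℂ] K} {S : K →L[ℂ] K}

theorem isProjectionValuedMeasure_flat_conj_preimage (hC : IsConjugation C)
    (h : IsProjectionValuedMeasure E) :
    IsProjectionValuedMeasure fun B => hC.flat (E (conj ⁻¹' B)) :=
  hC.isProjectionValuedOn_flat (h.map Complex.continuous_conj.measurable)

theorem diagMeasure_flat_conj_preimage (hC : IsConjugation C) (h : IsProjectionValuedMeasure E)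
    (ξ : K) : (hC.isProjectionValuedMeasure_flat_conj_preimage h).diagMeasure ξ =
      (h.diagMeasure (C ξ)).map conj := by
  have hconj : Measurable (conj : ℂ → ℂ) := Complex.continuous_conj.measurable
  ext B hB
  rw [Measure.map_apply hconj hB, IsProjectionValuedMeasure.diagMeasure_apply _ ξ hB,
    h.diagMeasure_apply _ (hconj hB), hC.flat_apply, hC.norm_map]

theorem represents_flat (hC : IsConjugation C) {h : IsProjectionValuedMeasure E}
    (hS : h.Represents S) :
    (hC.isProjectionValuedMeasure_flat_conj_preimage h).Represents (hC.flat S) where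
  integrable ξ := by
    rw [hC.diagMeasure_flat_conj_preimage h,
      integrable_map_measure continuous_id'.aestronglyMeasurable
        Complex.continuous_conj.aemeasurable]
    exact Complex.conjCLE.toContinuousLinearMap.integrable_comp (hS.integrable (C ξ))
  inner_apply_self ξ := by
    rw [hC.diagMeasure_flat_conj_preimage h, hC.inner_flat, hS.inner_apply_self, ← integral_conj,
      integral_map Complex.continuous_conj.aemeasurable continuous_id'.aestronglyMeasurable]

theorem flat_apply_conj_preimage (hC : IsConjugation C) {h : IsProjectionValuedMeasure E}
    (hS : h.Represents S) (hSC : hC.flat S = S) {B : Set ℂ} (hB : MeasurableSet B) :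
    hC.flat (E (conj ⁻¹' B)) = E B :=
  hS.apply_eq (hSC ▸ hC.represents_flat hS) hB

end IsConjugation

namespace IsSpectralMeasure

variable {K : Type*} [NormedAddCommGroup K] [InnerProductSpace ℂ K] [CompleteSpace K]
  {𝔖 : Set ℂ} {E : Set ℂ → K →L[ℂ] K} {μ : K → Measure ℂ} {S : K →L[ℂ] K}

theorem isProjectionValuedMeasure (hE : IsSpectralMeasure 𝔖 E μ) (h𝔖 : MeasurableSet 𝔖) :
    IsProjectionValuedMeasure fun B => E (B ∩ 𝔖) :=
  have h : IsProjectionValuedOn {B | MeasurableSet B ∧ B ⊆ 𝔖} 𝔖 E :=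
    { isSelfAdjoint := fun A hA => hE.selfAdjoint A hA.1 hA.2
      empty := hE.empty
      total := hE.univ
      inter := fun A hA B hB => hE.inter A B hA.1 hB.1 hA.2 hB.2
      hasSum_inner := fun ξ η A hA =>
        hE.countablyAdditive ξ η A (fun n => (hA n).1) fun n => (hA n).2 }
  h.map (φ := id) fun _ hB => ⟨hB.inter h𝔖, Set.inter_subset_right⟩

theorem diagMeasure_eq (hE : IsSpectralMeasure 𝔖 E μ) (h𝔖 : MeasurableSet 𝔖) (ξ : K) :
    (hE.isProjectionValuedMeasure h𝔖).diagMeasure ξ = μ ξ := by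
  ext B hB
  rw [IsProjectionValuedMeasure.diagMeasure, Measure.ofMeasurable_apply B hB,
    ← hE.measure_eq ξ _ (hB.inter h𝔖) Set.inter_subset_right,
    measure_inter_conull (hE.measure_compl ξ)]

theorem represents (hE : IsSpectralMeasure 𝔖 E μ) (h𝔖 : IsCompact 𝔖)
    (hSE : ∀ ξ, ⟪ξ, S ξ⟫_ℂ = specInt μ (fun z => z) ξ ξ) :
    (hE.isProjectionValuedMeasure h𝔖.measurableSet).Represents S where
  integrable ξ := by
    have hrestrict : (μ ξ).restrict 𝔖 = μ ξ :=
      Measure.restrict_eq_self_of_ae_mem (hE.measure_compl ξ)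
    rw [hE.diagMeasure_eq h𝔖.measurableSet, ← hrestrict, ← hE.diagMeasure_eq h𝔖.measurableSet]
    exact continuous_id.continuousOn.integrableOn_compact h𝔖
  inner_apply_self ξ := by
    have hsmul (a : ℂ) : ∫ z, z ∂μ (a • ξ) = ‖a‖ ^ 2 * ∫ z, z ∂μ ξ := by
      rw [← hE.diagMeasure_eq h𝔖.measurableSet, IsProjectionValuedMeasure.diagMeasure_smul,
        integral_smul_measure, ENNReal.toReal_ofReal (by positivity), Complex.real_smul,
        Complex.ofReal_pow, hE.diagMeasure_eq h𝔖.measurableSet]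
    have hadd : ξ + Complex.I • ξ = (1 + Complex.I) • ξ := by rw [add_smul, one_smul]
    have hsub : ξ - Complex.I • ξ = (1 - Complex.I) • ξ := by rw [sub_smul, one_smul]
    have hnorm : ‖(1 + Complex.I : ℂ)‖ = ‖(1 - Complex.I : ℂ)‖ := by
      rw [← Complex.norm_conj]; simp [sub_eq_add_neg]
    rw [hE.diagMeasure_eq h𝔖.measurableSet, hSE, specInt, hadd, hsub, ← two_smul ℂ ξ, sub_self,
      ← zero_smul ℂ ξ, hsmul, hsmul, hsmul, hsmul, hnorm]
    norm_num
    ring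

end IsSpectralMeasure

/-- The folding of `ℂ` along the real axis. It is the quotient map identifying `z` with `conj z`, so
that pushing a measure forward along it forgets all but the conjugation-symmetric Borel sets. -/
noncomputable def foldConj (z : ℂ) : ℂ := ⟨z.re, |z.im|⟩

theorem continuous_foldConj : Continuous foldConj :=
  Complex.equivRealProdCLM.symm.continuous.comp
    (Complex.continuous_re.prodMk Complex.continuous_im.abs)

theorem foldConj_conj (z : ℂ) : foldConj (conj z) = foldConj z := by
  simp [foldConj]

theorem foldConj_eq_self_or (z : ℂ) : foldConj z = z ∨ foldConj z = conj z :=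
  (abs_choice z.im).imp (Complex.ext rfl) (Complex.ext rfl)

theorem conj_preimage_foldConj_preimage (B : Set ℂ) :
    conj ⁻¹' (foldConj ⁻¹' B) = foldConj ⁻¹' B := by
  ext z
  rw [Set.mem_preimage, Set.mem_preimage, foldConj_conj, Set.mem_preimage]

theorem foldConj_preimage_eq_self {B : Set ℂ} (hB : conj ⁻¹' B = B) : foldConj ⁻¹' B = B := by
  ext z
  rcases foldConj_eq_self_or z with hz | hz
  · rw [Set.mem_preimage, hz]
  · rw [Set.mem_preimage, hz, ← Set.mem_preimage, hB]

section RealSpectralMeasure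

variable {K : Type*} [NormedAddCommGroup K] [InnerProductSpace ℂ K] [CompleteSpace K]
  {C : K → K} {𝔖 A B : Set ℂ} {E F : Set ℂ → K →L[ℂ] K} {S : K →L[ℂ] K}

theorem inter_mem_borE (hC : IsConjugation C) (h𝔖 : MeasurableSet 𝔖)
    (hEC : ∀ B, MeasurableSet B → hC.flat (E (conj ⁻¹' B ∩ 𝔖)) = E (B ∩ 𝔖))
    (hB : MeasurableSet B) (hBsymm : conj ⁻¹' B = B) : B ∩ 𝔖 ∈ borE C 𝔖 E :=
  have hflat : hC.flat (E (B ∩ 𝔖)) = E (B ∩ 𝔖) := by simpa only [hBsymm] using hEC B hB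
  ⟨hB.inter h𝔖, Set.inter_subset_right, DFunLike.congr_fun hflat⟩

theorem apply_conj_preimage_of_mem_borE (hC : IsConjugation C)
    (hEC : ∀ B, MeasurableSet B → hC.flat (E (conj ⁻¹' B ∩ 𝔖)) = E (B ∩ 𝔖))
    (hA : A ∈ borE C 𝔖 E) : E (conj ⁻¹' A ∩ 𝔖) = E (A ∩ 𝔖) := by
  obtain ⟨hAm, hA𝔖, hAC⟩ := hA
  refine hC.flat_involutive.injective ((hEC A hAm).trans ?_)
  rw [Set.inter_eq_left.2 hA𝔖]
  exact ContinuousLinearMap.ext fun ξ => (hAC ξ).symm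

theorem apply_eq_of_symmetric {h : IsProjectionValuedMeasure fun B => E (B ∩ 𝔖)}
    (hS : h.Represents S) (hF : IsProjectionValuedOn (borE C 𝔖 E) 𝔖 F)
    (hmem : ∀ B, MeasurableSet B → conj ⁻¹' B = B → B ∩ 𝔖 ∈ borE C 𝔖 E)
    (hinv : ∀ A ∈ borE C 𝔖 E, ∀ ξ, F A ξ = ξ → F A (S ξ) = S ξ)
    (hspec : ∀ A ∈ borE C 𝔖 E, ∀ w ∉ closure A, ∀ y, F A y = y →
      ∃! x, F A x = x ∧ w • x - S x = y)
    (hB : MeasurableSet B) (hBsymm : conj ⁻¹' B = B) : F (B ∩ 𝔖) = E (B ∩ 𝔖) := by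
  have hfold (B : Set ℂ) (hB : MeasurableSet B) : foldConj ⁻¹' B ∩ 𝔖 ∈ borE C 𝔖 E :=
    hmem _ (continuous_foldConj.measurable hB) (conj_preimage_foldConj_preimage B)
  have hclosure (D : Set ℂ) (hD : IsClosed D) :
      closure (foldConj ⁻¹' D ∩ 𝔖) ⊆ foldConj ⁻¹' D :=
    closure_minimal Set.inter_subset_left (hD.preimage continuous_foldConj)
  have hFE : F (foldConj ⁻¹' B ∩ 𝔖) = E (foldConj ⁻¹' B ∩ 𝔖) :=
    hS.apply_eq_preimage_of_localized (hF.map hfold) continuous_foldConj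
      (fun B hB => hinv _ (hfold B hB))
      (fun D hD w hw => hspec _ (hfold D hD.measurableSet) w fun hwD => hw (hclosure D hD hwD)) hB
  rwa [foldConj_preimage_eq_self hBsymm] at hFE

theorem apply_eq_of_forall_symmetric_eq (h : IsProjectionValuedMeasure fun B => E (B ∩ 𝔖))
    (hF : IsProjectionValuedOn (borE C 𝔖 E) 𝔖 F)
    (hmem : ∀ B, MeasurableSet B → conj ⁻¹' B = B → B ∩ 𝔖 ∈ borE C 𝔖 E)
    (hFE : ∀ B, MeasurableSet B → conj ⁻¹' B = B → F (B ∩ 𝔖) = E (B ∩ 𝔖))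
    (hA : A ∈ borE C 𝔖 E) (hAconj : E (conj ⁻¹' A ∩ 𝔖) = E (A ∩ 𝔖)) : F A = E A := by
  have hAm := hA.1
  have hA'm : MeasurableSet (conj ⁻¹' A) := Complex.continuous_conj.measurable hAm
  have hconj_conj : conj ⁻¹' (conj ⁻¹' A) = A := by
    ext z
    simp
  have hcap : conj ⁻¹' (A ∩ conj ⁻¹' A) = A ∩ conj ⁻¹' A := by
    rw [Set.preimage_inter, hconj_conj, Set.inter_comm]
  have hcup : conj ⁻¹' (A ∪ conj ⁻¹' A) = A ∪ conj ⁻¹' A := by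
    rw [Set.preimage_union, hconj_conj, Set.union_comm]
  have hEcap : E (A ∩ conj ⁻¹' A ∩ 𝔖) = E (A ∩ 𝔖) :=
    calc E (A ∩ conj ⁻¹' A ∩ 𝔖) = E (A ∩ 𝔖) * E (conj ⁻¹' A ∩ 𝔖) := h.inter A hAm _ hA'm
      _ = E (A ∩ 𝔖) := by rw [hAconj, (h.isStarProjection hAm).isIdempotentElem.eq]
  have hEcup : E ((A ∪ conj ⁻¹' A) ∩ 𝔖) = E (A ∩ 𝔖) := h.apply_union_of_eq hAm hA'm hAconj.symm
  have hcapm := hAm.inter hA'm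
  have hcupm := hAm.union hA'm
  have hFA : F A = F (A ∩ conj ⁻¹' A ∩ 𝔖) :=
    hF.apply_eq_of_subset_of_subset hA (hmem _ hcapm hcap) (hmem _ hcupm hcup)
      (fun z hz => hz.1.1) (fun z hz => ⟨Or.inl hz, hA.2.1 hz⟩)
      (by rw [hFE _ hcapm hcap, hFE _ hcupm hcup, hEcap, hEcup])
  calc F A = F (A ∩ conj ⁻¹' A ∩ 𝔖) := hFA
    _ = E (A ∩ conj ⁻¹' A ∩ 𝔖) := hFE _ hcapm hcap
    _ = E A := by rw [hEcap, Set.inter_eq_left.2 hA.2.1]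

theorem spectralMeasure_uniqueness_bounded_general (hC : IsConjugation C) (hflat : hC.flat S = S)
    (h𝔖 : MeasurableSet 𝔖) {h : IsProjectionValuedMeasure fun B => E (B ∩ 𝔖)}
    (hS : h.Represents S) (hF : IsProjectionValuedOn (borE C 𝔖 E) 𝔖 F)
    (hinv : ∀ A ∈ borE C 𝔖 E, ∀ ξ, F A ξ = ξ → F A (S ξ) = S ξ)
    (hspec : ∀ A ∈ borE C 𝔖 E, ∀ w ∉ closure A, ∀ y, F A y = y →
      ∃! x, F A x = x ∧ w • x - S x = y)
    (hA : A ∈ borE C 𝔖 E) : F A = E A := by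
  have hEC (B : Set ℂ) (hB : MeasurableSet B) : hC.flat (E (conj ⁻¹' B ∩ 𝔖)) = E (B ∩ 𝔖) :=
    hC.flat_apply_conj_preimage hS hflat hB
  have hmem (B : Set ℂ) (hB : MeasurableSet B) (hBsymm : conj ⁻¹' B = B) :
      B ∩ 𝔖 ∈ borE C 𝔖 E := inter_mem_borE hC h𝔖 hEC hB hBsymm
  have hsymm (B : Set ℂ) (hB : MeasurableSet B) (hBsymm : conj ⁻¹' B = B) :
      F (B ∩ 𝔖) = E (B ∩ 𝔖) := apply_eq_of_symmetric hS hF hmem hinv hspec hB hBsymm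
  exact apply_eq_of_forall_symmetric_eq h hF hmem hsymm hA
    (apply_conj_preimage_of_mem_borE hC hEC hA)

end RealSpectralMeasure

/-- **uniqueness of the real spectral measure, bounded case.**
Let `C` be a conjugation on `K`, `S` a bounded normal operator with `S♭ = S`, and `E` (with
diagonal scalar measures `μ`) the spectral measure of `S` on `𝔖 = σ(S)`.  If `F` is a map on
`Bor_E(𝔖)` whose values are self-adjoint idempotents commuting with `C`, with `F(∅) = 0`,
`F(𝔖) = I`, `F(A ∩ B) = F(A)F(B)`, weakly countably additive, such that every `F(A)K` is
`S`-invariant and the spectrum of `S|F(A)K` is contained in `closure A`, then `F = E` on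
`Bor_E(𝔖)`. -/
theorem spectralMeasure_uniqueness_bounded
    {K : Type*} [NormedAddCommGroup K] [InnerProductSpace ℂ K] [CompleteSpace K]
    {C : K → K} (hC : IsConjugation C) (S : K →L[ℂ] K)
    (hnormal : (ContinuousLinearMap.adjoint S) ∘L S = S ∘L (ContinuousLinearMap.adjoint S))
    (hflat : ∀ ξ : K, C (S (C ξ)) = S ξ)
    (E : Set ℂ → K →L[ℂ] K) (μ : K → Measure ℂ)
    (hE : IsSpectralMeasure (spectrum ℂ S) E μ)
    (hSE : ∀ ξ η : K, ⟪η, S ξ⟫_ℂ = specInt μ (fun z => z) ξ η)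
    (F : Set ℂ → K →L[ℂ] K)
    (hFsa : ∀ A ∈ borE C (spectrum ℂ S) E, IsSelfAdjoint (F A))
    (hFidem : ∀ A ∈ borE C (spectrum ℂ S) E, F A ∘L F A = F A)
    (hFflat : ∀ A ∈ borE C (spectrum ℂ S) E, ∀ ξ : K, C (F A (C ξ)) = F A ξ)
    (hFempty : F ∅ = 0) (hFuniv : F (spectrum ℂ S) = 1)
    (hFinter : ∀ A ∈ borE C (spectrum ℂ S) E, ∀ B ∈ borE C (spectrum ℂ S) E,
      F (A ∩ B) = F A ∘L F B)
    (hFadd : ∀ (ξ η : K) (A : ℕ → Set ℂ), (∀ n, A n ∈ borE C (spectrum ℂ S) E) →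
      Pairwise (Function.onFun Disjoint A) →
      HasSum (fun n => ⟪η, F (A n) ξ⟫_ℂ) ⟪η, F (⋃ n, A n) ξ⟫_ℂ)
    (hFSinv : ∀ A ∈ borE C (spectrum ℂ S) E, ∀ ξ : K, F A ξ = ξ → F A (S ξ) = S ξ)
    (hFspec : ∀ A ∈ borE C (spectrum ℂ S) E, ∀ z₀ : ℂ, z₀ ∉ closure A →
      ∀ y : K, F A y = y → ∃! x : K, F A x = x ∧ z₀ • x - S x = y) :
    ∀ A ∈ borE C (spectrum ℂ S) E, F A = E A :=
  fun _ hA => spectralMeasure_uniqueness_bounded_general hC (ContinuousLinearMap.ext hflat)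
    (spectrum.isCompact S).measurableSet (hE.represents (spectrum.isCompact S) fun ξ => hSE ξ ξ)
    ⟨hFsa, hFempty, hFuniv, hFinter, hFadd⟩ hFSinv hFspec hA
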